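/- arXiv:2505.10077 — 2 statements merged into one kernel-verified Lean document; each statement's English description precedes it below -/
import Mathlib

section
/- Let $p$ be a prime number and let $\mu$ be the Haar measure on the additive group $\mathbb{Q}_p$ normalized so that $\mu(\mathbb{Z}_p) = 1$; let $\mu^2 = \mu \times \mu$ on $\mathbb{Q}_p^2$. Then $\int_{R} \big(|x|_p \cdot \max\{1, |y|_p\} \cdot \max\{|y - 1|_p, |x - 1|_p\}\big)^{-1} \, d\mu^2(x, y) = 1 + \frac{4}{p}$, where $R = \{(x,y) \in \mathbb{Q}_p^2 : |x|_p \ge 1\} \cup \{(x,y) \in \mathbb{Q}_p^2 : |y|_p \le |x|_p < 1 \text{ and } x \ne 0\}$ and $|\cdot|_p$ is the $p$-adic absolute value. -/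
open MeasureTheory

section helpers
variable {p : ℕ} [hp : Fact p.Prime] [MeasurableSpace ℚ_[p]] [BorelSpace ℚ_[p]]
  (μ : Measure ℚ_[p]) [μ.IsAddHaarMeasure]

theorem aux_one_lt (p : ℕ) [hp : Fact p.Prime] : (1:ℝ) < p := by exact_mod_cast hp.out.one_lt

theorem aux_translate (a : ℚ_[p]) (r : ℝ) :
    μ.real (Metric.closedBall a r) = μ.real (Metric.closedBall 0 r) := by
  have := measure_preimage_add μ (-a) (Metric.closedBall (0 : ℚ_[p]) r)
  rw [measureReal_def, measureReal_def, ← this]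
  congr 2
  ext x
  simp [dist_eq_norm, sub_eq_neg_add]

theorem aux_step (n : ℤ) :
    μ.real (Metric.closedBall (0 : ℚ_[p]) ((p:ℝ) ^ n))
      = p * μ.real (Metric.closedBall (0 : ℚ_[p]) ((p:ℝ) ^ (n - 1))) := by
  have hp0 : (p : ℚ_[p]) ≠ 0 := by exact_mod_cast hp.out.ne_zero
  have hP := aux_one_lt p
  have hP0 : (0:ℝ) < p := by linarith
  have hU : Metric.closedBall (0 : ℚ_[p]) ((p:ℝ) ^ n)
      = ⋃ i : Fin p, Metric.closedBall (((i : ℕ) : ℚ_[p]) * (p : ℚ_[p]) ^ (-n)) ((p:ℝ) ^ (n-1)) := by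
    ext x
    simp only [Metric.mem_closedBall, Set.mem_iUnion, dist_eq_norm, sub_zero]
    constructor
    · intro hx
      have h1 : ‖x * (p : ℚ_[p]) ^ n‖ ≤ 1 := by
        rw [norm_mul, Padic.norm_p_zpow, zpow_neg]
        rw [mul_inv_le_iff₀ (zpow_pos hP0 _)]; simpa using hx
      obtain ⟨i, hi, hm⟩ := PadicInt.exists_mem_range (⟨_, h1⟩ : ℤ_[p])
      refine ⟨⟨i, hi⟩, ?_⟩
      rw [IsLocalRing.mem_maximalIdeal, PadicInt.mem_nonunits] at hm
      replace hm : ‖x * (p : ℚ_[p]) ^ n - i‖ < 1 := by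
        rw [PadicInt.norm_def] at hm
        exact_mod_cast hm
      rw [← Padic.norm_lt_pow_iff_norm_le_pow_sub_one]
      have : x - (i : ℚ_[p]) * (p : ℚ_[p]) ^ (-n) = (x * (p : ℚ_[p]) ^ n - i) * (p : ℚ_[p]) ^ (-n) := by
        rw [sub_mul, mul_assoc, ← zpow_add₀ hp0]; simp
      rw [this, norm_mul, Padic.norm_p_zpow, neg_neg]
      exact mul_lt_of_lt_one_left (zpow_pos hP0 _) hm
    · rintro ⟨i, hi⟩
      have h2 : ‖((i : ℕ) : ℚ_[p]) * (p : ℚ_[p]) ^ (-n)‖ ≤ (p:ℝ)^n := by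
        rw [norm_mul, Padic.norm_p_zpow, neg_neg]
        refine mul_le_of_le_one_left (zpow_pos hP0 _).le ?_
        exact_mod_cast Padic.norm_int_le_one (p := p) (i : ℕ)
      have h3 : (p:ℝ)^(n-1) ≤ (p:ℝ)^n := zpow_le_zpow_right₀ hP.le (by lia)
      have := Padic.nonarchimedean (x - ((i : ℕ) : ℚ_[p]) * (p : ℚ_[p]) ^ (-n)) (((i : ℕ) : ℚ_[p]) * (p : ℚ_[p]) ^ (-n))
      rw [sub_add_cancel] at this
      exact this.trans (max_le (hi.trans h3) h2)
  rw [hU, measureReal_iUnion_fintype (h' := fun i => (isCompact_closedBall _ _).measure_lt_top.ne)]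
  · simp [aux_translate]
  · intro i j hij
    rw [Function.onFun, Set.disjoint_left]
    intro x hi hj
    simp only [Metric.mem_closedBall, dist_eq_norm, ← Padic.norm_lt_pow_iff_norm_le_pow_sub_one] at hi hj
    have := Padic.nonarchimedean (x - ((j : ℕ) : ℚ_[p]) * (p : ℚ_[p]) ^ (-n)) (-(x - ((i : ℕ) : ℚ_[p]) * (p : ℚ_[p]) ^ (-n)))
    rw [norm_neg] at this
    have h4 := this.trans_lt (max_lt hj hi)
    have h5 : (x - ((j : ℕ) : ℚ_[p]) * (p : ℚ_[p]) ^ (-n)) + (-(x - ((i : ℕ) : ℚ_[p]) * (p : ℚ_[p]) ^ (-n)))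
      = (((i : ℤ) - (j : ℤ) : ℤ) : ℚ_[p]) * (p : ℚ_[p]) ^ (-n) := by push_cast; ring
    rw [h5, norm_mul, Padic.norm_p_zpow, neg_neg] at h4
    have h6 := (mul_lt_iff_lt_one_left (zpow_pos hP0 _)).1 h4
    rw [Padic.norm_intCast_lt_one_iff] at h6
    apply hij
    have h7 := Int.eq_zero_of_abs_lt_dvd h6 (by rw [abs_lt]; omega)
    ext; omega
  · intro i; exact Metric.isClosed_closedBall.measurableSet

theorem aux_ball (hμ : μ {x : ℚ_[p] | ‖x‖ ≤ 1} = 1) (n : ℤ) (a : ℚ_[p]) :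
    μ.real (Metric.closedBall a ((p:ℝ) ^ n)) = (p:ℝ) ^ n := by
  have hP := aux_one_lt p
  have hP0 : (p:ℝ) ≠ 0 := by linarith
  rw [aux_translate]
  induction n using Int.induction_on with
  | zero =>
    have : Metric.closedBall (0:ℚ_[p]) ((p:ℝ) ^ (0:ℤ)) = {x : ℚ_[p] | ‖x‖ ≤ 1} := by
      ext x; simp
    rw [this, measureReal_def, hμ]; simp
  | succ n ih =>
    rw [aux_step, add_sub_cancel_right, ih, zpow_add_one₀ hP0, mul_comm]
  | pred n ih =>
    rw [aux_step] at ih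
    have h2 : (p:ℝ) ^ (-(n:ℤ) - 1) = (p:ℝ) ^ (-(n:ℤ)) / p := zpow_sub_one₀ hP0 _
    exact ((eq_div_iff hP0).2 ((mul_comm _ _).trans ih)).trans h2.symm

theorem aux_sphere (hμ : μ {x : ℚ_[p] | ‖x‖ ≤ 1} = 1) (n : ℤ) :
    μ.real (Metric.sphere (0 : ℚ_[p]) ((p:ℝ) ^ n)) = (p:ℝ) ^ n * (1 - (p:ℝ)⁻¹) := by
  have hP := aux_one_lt p
  have hP0 : (p:ℝ) ≠ 0 := by linarith
  have : Metric.sphere (0 : ℚ_[p]) ((p:ℝ) ^ n)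
      = Metric.closedBall 0 ((p:ℝ) ^ n) \ Metric.closedBall 0 ((p:ℝ) ^ (n-1)) := by
    ext x
    simp only [mem_sphere_iff_norm, sub_zero, Set.mem_sdiff, Metric.mem_closedBall, dist_zero_right,
      ← Padic.norm_lt_pow_iff_norm_le_pow_sub_one, not_lt]
    exact le_antisymm_iff
  rw [this, measureReal_sdiff (h₁ := (isCompact_closedBall _ _).measure_lt_top.ne) _ Metric.isClosed_closedBall.measurableSet, aux_ball μ hμ, aux_ball μ hμ,
    zpow_sub_one₀ hP0]
  · ring
  · exact Metric.closedBall_subset_closedBall (zpow_le_zpow_right₀ hP.le (by lia))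
end helpers

/-- integrable on `S` with integral `T` -/
def HasInt {X : Type*} [MeasurableSpace X] (ν : Measure X) (f : X → ℝ) (S : Set X) (T : ℝ) : Prop :=
  IntegrableOn f S ν ∧ ∫ z in S, f z ∂ν = T

theorem HasInt.union {X : Type*} [MeasurableSpace X] {ν : Measure X} {f : X → ℝ} {S₁ S₂ : Set X}
    {T₁ T₂ : ℝ} (h₁ : HasInt ν f S₁ T₁) (h₂ : HasInt ν f S₂ T₂) (hd : Disjoint S₁ S₂)
    (hm : MeasurableSet S₂) : HasInt ν f (S₁ ∪ S₂) (T₁ + T₂) :=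
  ⟨h₁.1.union h₂.1, by rw [setIntegral_union hd hm h₁.1 h₂.1, h₁.2, h₂.2]⟩

theorem HasInt.const {X : Type*} [MeasurableSpace X] {ν : Measure X} {f : X → ℝ} {S : Set X}
    (hm : MeasurableSet S) (hν : ν S ≠ ⊤) (c : ℝ) (hc : ∀ z ∈ S, f z = c) :
    HasInt ν f S (c * ν.real S) := by
  refine ⟨IntegrableOn.congr_fun (f := fun _ => c) (integrableOn_const hν)
    (fun z hz => (hc z hz).symm) hm, ?_⟩
  rw [setIntegral_congr_fun hm (g := fun _ => c) hc]
  simp [mul_comm]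

theorem HasInt.iUnion {X ι : Type*} [Countable ι] [MeasurableSpace X] {ν : Measure X} {f : X → ℝ}
    (S : ι → Set X) (c : ι → ℝ) {T : ℝ}
    (hm : ∀ i, MeasurableSet (S i)) (hν : ∀ i, ν (S i) ≠ ⊤)
    (hd : Pairwise (Function.onFun Disjoint S))
    (hc : ∀ i, ∀ z ∈ S i, f z = c i) (hf : ∀ z, 0 ≤ f z)
    (hT : HasSum (fun i => c i * ν.real (S i)) T) :
    HasInt ν f (⋃ i, S i) T := by
  have h := fun i => HasInt.const (hm i) (hν i) (c i) (hc i)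
  have hI : IntegrableOn f (⋃ i, S i) ν := by
    refine integrableOn_iUnion_of_summable_integral_norm (fun i => (h i).1) ?_
    simp only [Real.norm_of_nonneg (hf _), (h _).2]
    exact hT.summable
  refine ⟨hI, ?_⟩
  have := hasSum_integral_iUnion hm hd hI
  simp only [(h _).2] at this
  exact this.unique hT

theorem aux_hs {ι : Type*} {f g : ι → ℝ} {a b : ℝ} (h : HasSum g b) (hfg : ∀ k, f k = g k)
    (hab : a = b) : HasSum f a := by
  rw [hab, funext hfg]; exact h

section pieces
variable {p : ℕ} [hp : Fact p.Prime]

theorem aux_exists_gt {x : ℚ_[p]} (hx : 1 < ‖x‖) : ∃ k : ℕ, ‖x‖ = (p:ℝ) ^ (k + 1) := by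
  have hP := aux_one_lt p
  have h0 : x ≠ 0 := by rintro rfl; simp at hx; linarith
  have h := Padic.norm_eq_zpow_neg_valuation h0
  rw [h, one_lt_zpow_iff_right₀ hP] at hx
  refine ⟨(-x.valuation - 1).toNat, ?_⟩
  rw [h, ← zpow_natCast]
  congr 1
  push_cast
  lia

theorem aux_exists_lt {x : ℚ_[p]} (h0 : x ≠ 0) (hx : ‖x‖ < 1) :
    ∃ k : ℕ, ‖x‖ = (p:ℝ)⁻¹ ^ (k + 1) := by
  have hP := aux_one_lt p
  have h := Padic.norm_eq_zpow_neg_valuation h0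
  rw [h, zpow_lt_one_iff_right₀ hP] at hx
  refine ⟨(x.valuation - 1).toNat, ?_⟩
  rw [h, ← zpow_natCast, inv_zpow']
  congr 1
  push_cast
  lia

theorem aux_inv_pow (k : ℕ) : (p:ℝ)⁻¹ ^ k = (p:ℝ) ^ (-(k:ℤ)) := by
  rw [zpow_neg, zpow_natCast, inv_pow]

theorem aux_le_iff (x : ℚ_[p]) (k : ℕ) : ‖x‖ ≤ (p:ℝ)⁻¹ ^ (k + 1) ↔ ‖x‖ < (p:ℝ)⁻¹ ^ k := by
  rw [aux_inv_pow, aux_inv_pow, Padic.norm_lt_pow_iff_norm_le_pow_sub_one]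
  congr! 2
  push_cast; ring

theorem aux_sub_one_big {x : ℚ_[p]} (hx : 1 < ‖x‖) : ‖x - 1‖ = ‖x‖ := by
  have h : ‖x‖ ≠ ‖(-1 : ℚ_[p])‖ := by rw [norm_neg, norm_one]; exact hx.ne'
  rw [sub_eq_add_neg, Padic.add_eq_max_of_ne h, norm_neg, norm_one, max_eq_left hx.le]

theorem aux_sub_one_small {x : ℚ_[p]} (hx : ‖x‖ < 1) : ‖x - 1‖ = 1 := by
  have h : ‖x‖ ≠ ‖(-1 : ℚ_[p])‖ := by rw [norm_neg, norm_one]; exact hx.ne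
  rw [sub_eq_add_neg, Padic.add_eq_max_of_ne h, norm_neg, norm_one, max_eq_right hx.le]

theorem aux_sub_one_le {x : ℚ_[p]} (hx : ‖x‖ ≤ 1) : ‖x - 1‖ ≤ 1 := by
  have h := Padic.nonarchimedean x (-1)
  rw [norm_neg, norm_one, max_eq_right hx, ← sub_eq_add_neg] at h
  exact h

theorem aux_of_sub_one_lt {x : ℚ_[p]} (hx : ‖x - 1‖ < 1) : ‖x‖ = 1 := by
  rcases lt_trichotomy ‖x‖ 1 with h | h | h
  · rw [aux_sub_one_small h] at hx; exact absurd hx (lt_irrefl _)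
  · exact h
  · rw [aux_sub_one_big h] at hx; exact absurd hx h.not_gt

/-- the density -/
noncomputable def dens (z : ℚ_[p] × ℚ_[p]) : ℝ :=
  (‖z.1‖ * max 1 ‖z.2‖ * max ‖z.2 - 1‖ ‖z.1 - 1‖)⁻¹

theorem dens_nonneg (z : ℚ_[p] × ℚ_[p]) : 0 ≤ dens z := by
  unfold dens; positivity

theorem aux_q (p : ℕ) [hp : Fact p.Prime] : (0:ℝ) < (p:ℝ)⁻¹ ∧ (p:ℝ)⁻¹ < 1 := by
  have hP := aux_one_lt p
  exact ⟨by positivity, inv_lt_one_of_one_lt₀ hP⟩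

theorem aux_geom (p : ℕ) [hp : Fact p.Prime] :
    HasSum (fun k : ℕ => (p:ℝ)⁻¹ ^ (k+1)) ((p:ℝ)⁻¹ * (1 - (p:ℝ)⁻¹)⁻¹) := by
  have := (hasSum_geometric_of_lt_one (aux_q p).1.le (aux_q p).2).mul_left (p:ℝ)⁻¹
  simpa only [pow_succ'] using this

theorem aux_geom2 (p : ℕ) [hp : Fact p.Prime] :
    HasSum (fun k : ℕ × ℕ => (p:ℝ)⁻¹ ^ (k.1+1) * (p:ℝ)⁻¹ ^ k.2)
      (((p:ℝ)⁻¹ * (1 - (p:ℝ)⁻¹)⁻¹) * (1 - (p:ℝ)⁻¹)⁻¹) := by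
  have h1 := aux_geom p
  have h2 := (hasSum_geometric_of_lt_one (aux_q p).1.le (aux_q p).2)
  exact h1.mul h2 (h1.summable.mul_of_nonneg h2.summable
    (fun _ => pow_nonneg (aux_q p).1.le _) (fun _ => pow_nonneg (aux_q p).1.le _))

variable [MeasurableSpace ℚ_[p]] [BorelSpace ℚ_[p]]
  (μ : Measure ℚ_[p]) [μ.IsAddHaarMeasure]

theorem aux_sphere_pos (hμ : μ {x : ℚ_[p] | ‖x‖ ≤ 1} = 1)
    (k : ℕ) :
    μ.real (Metric.sphere (0 : ℚ_[p]) ((p:ℝ) ^ k)) = (p:ℝ) ^ k * (1 - (p:ℝ)⁻¹) := by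
  exact_mod_cast aux_sphere μ hμ k

theorem aux_sphere_one (hμ : μ {x : ℚ_[p] | ‖x‖ ≤ 1} = 1)
    :
    μ.real (Metric.sphere (0 : ℚ_[p]) 1) = (1 - (p:ℝ)⁻¹) := by
  simpa using aux_sphere_pos μ hμ 0

theorem aux_sphere_neg (hμ : μ {x : ℚ_[p] | ‖x‖ ≤ 1} = 1)
    (k : ℕ) :
    μ.real (Metric.sphere (0 : ℚ_[p]) ((p:ℝ)⁻¹ ^ k)) = (p:ℝ)⁻¹ ^ k * (1 - (p:ℝ)⁻¹) := by
  rw [aux_inv_pow]; exact aux_sphere μ hμ _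

theorem aux_ball_neg (hμ : μ {x : ℚ_[p] | ‖x‖ ≤ 1} = 1)
    (k : ℕ) (a : ℚ_[p]) :
    μ.real (Metric.closedBall a ((p:ℝ)⁻¹ ^ k)) = (p:ℝ)⁻¹ ^ k := by
  rw [aux_inv_pow]; exact aux_ball μ hμ _ _

theorem aux_ball_one (hμ : μ {x : ℚ_[p] | ‖x‖ ≤ 1} = 1)
    (a : ℚ_[p]) :
    μ.real (Metric.closedBall a 1) = 1 := by
  simpa using aux_ball_neg μ hμ 0 a

/-- Piece `|y| ≤ |x| < 1`. -/
theorem pieceB (hμ : μ {x : ℚ_[p] | ‖x‖ ≤ 1} = 1)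
    : HasInt (μ.prod μ) dens
    {z : ℚ_[p] × ℚ_[p] | ‖z.2‖ ≤ ‖z.1‖ ∧ ‖z.1‖ < 1 ∧ z.1 ≠ 0} (p:ℝ)⁻¹ := by
  obtain ⟨hq0, hq1⟩ := aux_q p
  have hU : {z : ℚ_[p] × ℚ_[p] | ‖z.2‖ ≤ ‖z.1‖ ∧ ‖z.1‖ < 1 ∧ z.1 ≠ 0} =
      ⋃ k : ℕ, Metric.sphere 0 ((p:ℝ)⁻¹ ^ (k+1)) ×ˢ Metric.closedBall 0 ((p:ℝ)⁻¹ ^ (k+1)) := by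
    ext ⟨x, y⟩
    simp only [Set.mem_ofPred_eq, Set.mem_iUnion, Set.mem_prod, mem_sphere_iff_norm, sub_zero,
      mem_closedBall_iff_norm]
    constructor
    · rintro ⟨h1, h2, h3⟩
      obtain ⟨k, hk⟩ := aux_exists_lt h3 h2
      exact ⟨k, hk, hk ▸ h1⟩
    · rintro ⟨k, hk, h⟩
      refine ⟨hk ▸ h, hk ▸ pow_lt_one₀ hq0.le hq1 (by lia), ?_⟩
      rw [← norm_pos_iff, hk]; positivity
  rw [hU]
  refine HasInt.iUnion _ (fun k => ((p:ℝ)⁻¹ ^ (k+1))⁻¹) ?_ ?_ ?_ ?_ dens_nonneg ?_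
  · exact fun k => Metric.isClosed_sphere.measurableSet.prod Metric.isClosed_closedBall.measurableSet
  · exact fun k => ((isCompact_sphere _ _).prod (isCompact_closedBall _ _)).measure_lt_top.ne
  · intro i j hij
    rw [Function.onFun, Set.disjoint_left]
    rintro ⟨x, y⟩ ⟨h1, -⟩ ⟨h2, -⟩
    simp only [mem_sphere_iff_norm] at h1 h2
    have := pow_right_injective₀ hq0 hq1.ne (h1.symm.trans h2)
    lia
  · rintro k ⟨x, y⟩ ⟨h1, h2⟩
    simp only [mem_sphere_iff_norm, sub_zero, mem_closedBall_iff_norm] at h1 h2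
    have h3 : (p:ℝ)⁻¹ ^ (k+1) < 1 := pow_lt_one₀ hq0.le hq1 (by lia)
    simp only [dens]
    rw [aux_sub_one_small (h1.trans_lt h3), aux_sub_one_small (h2.trans_lt h3), h1,
      max_eq_left (h2.trans h3.le)]
    simp
  · simp only [measureReal_prod_prod, aux_sphere_neg μ hμ, aux_ball_neg μ hμ]
    have h0 := (aux_q p).1.ne'
    refine aux_hs ((aux_geom p).mul_right (1 - (p:ℝ)⁻¹)) (fun k => ?_) ?_
    · have _h := h0
      generalize (p:ℝ)⁻¹ = q at *
      field_simp
    · have : 1 - (p:ℝ)⁻¹ ≠ 0 := by linarith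
      generalize (p:ℝ)⁻¹ = q at *
      field_simp

/-- Piece `|x| = 1 < |y|`. -/
theorem pieceA2 (hμ : μ {x : ℚ_[p] | ‖x‖ ≤ 1} = 1)
    : HasInt (μ.prod μ) dens
    {z : ℚ_[p] × ℚ_[p] | ‖z.1‖ = 1 ∧ 1 < ‖z.2‖} ((p:ℝ)⁻¹ * (1 - (p:ℝ)⁻¹)) := by
  have hP := aux_one_lt p
  obtain ⟨hq0, hq1⟩ := aux_q p
  have hU : {z : ℚ_[p] × ℚ_[p] | ‖z.1‖ = 1 ∧ 1 < ‖z.2‖} =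
      ⋃ k : ℕ, Metric.sphere 0 1 ×ˢ Metric.sphere 0 ((p:ℝ) ^ (k+1)) := by
    ext ⟨x, y⟩
    simp only [Set.mem_ofPred_eq, Set.mem_iUnion, Set.mem_prod, mem_sphere_iff_norm, sub_zero]
    constructor
    · rintro ⟨h1, h2⟩
      obtain ⟨k, hk⟩ := aux_exists_gt h2
      exact ⟨k, h1, hk⟩
    · rintro ⟨k, h, hk⟩
      exact ⟨h, hk ▸ one_lt_pow₀ hP (by lia)⟩
  rw [hU]
  refine HasInt.iUnion _ (fun k => ((p:ℝ) ^ (k+1) * (p:ℝ) ^ (k+1))⁻¹) ?_ ?_ ?_ ?_ dens_nonneg ?_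
  · exact fun k => Metric.isClosed_sphere.measurableSet.prod Metric.isClosed_sphere.measurableSet
  · exact fun k => ((isCompact_sphere _ _).prod (isCompact_sphere _ _)).measure_lt_top.ne
  · intro i j hij
    rw [Function.onFun, Set.disjoint_left]
    rintro ⟨x, y⟩ ⟨-, h1⟩ ⟨-, h2⟩
    simp only [mem_sphere_iff_norm] at h1 h2
    have := pow_right_injective₀ (by linarith) hP.ne' (h1.symm.trans h2)
    lia
  · rintro k ⟨x, y⟩ ⟨h1, h2⟩
    simp only [mem_sphere_iff_norm, sub_zero] at h1 h2
    have h3 : 1 < (p:ℝ) ^ (k+1) := one_lt_pow₀ hP (by lia)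
    simp only [dens]
    rw [aux_sub_one_big (x := y) (h3.trans_eq h2.symm), h1, h2, max_eq_right h3.le,
      max_eq_left ((aux_sub_one_le h1.le).trans h3.le), one_mul]
  · simp only [measureReal_prod_prod, aux_sphere_pos μ hμ, aux_sphere_one μ hμ]
    refine aux_hs ((aux_geom p).mul_right ((1 - (p:ℝ)⁻¹)^2)) (fun k => ?_) ?_
    · simp only [inv_pow, pow_add]; field_simp
    · have : 1 - (p:ℝ)⁻¹ ≠ 0 := by linarith
      generalize (p:ℝ)⁻¹ = q at *
      field_simp

/-- Piece `|y| ≤ 1 < |x|`. -/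
theorem pieceA3 (hμ : μ {x : ℚ_[p] | ‖x‖ ≤ 1} = 1)
    : HasInt (μ.prod μ) dens
    {z : ℚ_[p] × ℚ_[p] | 1 < ‖z.1‖ ∧ ‖z.2‖ ≤ 1} ((p:ℝ)⁻¹) := by
  have hP := aux_one_lt p
  obtain ⟨hq0, hq1⟩ := aux_q p
  have hU : {z : ℚ_[p] × ℚ_[p] | 1 < ‖z.1‖ ∧ ‖z.2‖ ≤ 1} =
      ⋃ k : ℕ, Metric.sphere 0 ((p:ℝ) ^ (k+1)) ×ˢ Metric.closedBall 0 1 := by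
    ext ⟨x, y⟩
    simp only [Set.mem_ofPred_eq, Set.mem_iUnion, Set.mem_prod, mem_sphere_iff_norm, sub_zero,
      mem_closedBall_iff_norm]
    constructor
    · rintro ⟨h1, h2⟩
      obtain ⟨k, hk⟩ := aux_exists_gt h1
      exact ⟨k, hk, h2⟩
    · rintro ⟨k, hk, h⟩
      exact ⟨hk ▸ one_lt_pow₀ hP (by lia), h⟩
  rw [hU]
  refine HasInt.iUnion _ (fun k => ((p:ℝ) ^ (k+1) * (p:ℝ) ^ (k+1))⁻¹) ?_ ?_ ?_ ?_ dens_nonneg ?_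
  · exact fun k => Metric.isClosed_sphere.measurableSet.prod Metric.isClosed_closedBall.measurableSet
  · exact fun k => ((isCompact_sphere _ _).prod (isCompact_closedBall _ _)).measure_lt_top.ne
  · intro i j hij
    rw [Function.onFun, Set.disjoint_left]
    rintro ⟨x, y⟩ ⟨h1, -⟩ ⟨h2, -⟩
    simp only [mem_sphere_iff_norm] at h1 h2
    have := pow_right_injective₀ (by linarith) hP.ne' (h1.symm.trans h2)
    lia
  · rintro k ⟨x, y⟩ ⟨h1, h2⟩
    simp only [mem_sphere_iff_norm, sub_zero, mem_closedBall_iff_norm] at h1 h2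
    have h3 : 1 < (p:ℝ) ^ (k+1) := one_lt_pow₀ hP (by lia)
    simp only [dens]
    rw [aux_sub_one_big (x := x) (h3.trans_eq h1.symm), h1, max_eq_left h2,
      max_eq_right ((aux_sub_one_le h2).trans h3.le), mul_one]
  · simp only [measureReal_prod_prod, aux_sphere_pos μ hμ, aux_ball_one μ hμ]
    refine aux_hs ((aux_geom p).mul_right (1 - (p:ℝ)⁻¹)) (fun k => ?_) ?_
    · simp only [inv_pow, pow_add]; field_simp
    · have : 1 - (p:ℝ)⁻¹ ≠ 0 := by linarith
      generalize (p:ℝ)⁻¹ = q at *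
      field_simp

/-- Piece `1 < |y| ≤ |x|`. -/
theorem pieceA4a (hμ : μ {x : ℚ_[p] | ‖x‖ ≤ 1} = 1)
    : HasInt (μ.prod μ) dens
    {z : ℚ_[p] × ℚ_[p] | 1 < ‖z.2‖ ∧ ‖z.2‖ ≤ ‖z.1‖} ((p:ℝ)⁻¹) := by
  have hP := aux_one_lt p
  obtain ⟨hq0, hq1⟩ := aux_q p
  have hU : {z : ℚ_[p] × ℚ_[p] | 1 < ‖z.2‖ ∧ ‖z.2‖ ≤ ‖z.1‖} =
      ⋃ k : ℕ × ℕ, Metric.sphere 0 ((p:ℝ) ^ (k.1+1+k.2)) ×ˢ Metric.sphere 0 ((p:ℝ) ^ (k.1+1)) := by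
    ext ⟨x, y⟩
    simp only [Set.mem_ofPred_eq, Set.mem_iUnion, Set.mem_prod, mem_sphere_iff_norm, sub_zero]
    constructor
    · rintro ⟨h1, h2⟩
      obtain ⟨k, hk⟩ := aux_exists_gt h1
      obtain ⟨l, hl⟩ := aux_exists_gt (h1.trans_le h2)
      rw [hk, hl, pow_le_pow_iff_right₀ hP] at h2
      exact ⟨(k, l - k), by rw [hl]; congr 1; simp; lia, hk⟩
    · rintro ⟨k, hk, h⟩
      exact ⟨h ▸ one_lt_pow₀ hP (by lia), hk ▸ h ▸ pow_le_pow_right₀ hP.le (by lia)⟩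
  rw [hU]
  refine HasInt.iUnion _ (fun k => ((p:ℝ) ^ (k.1+1+k.2) * (p:ℝ) ^ (k.1+1) *
    (p:ℝ) ^ (k.1+1+k.2))⁻¹) ?_ ?_ ?_ ?_ dens_nonneg ?_
  · exact fun k => Metric.isClosed_sphere.measurableSet.prod Metric.isClosed_sphere.measurableSet
  · exact fun k => ((isCompact_sphere _ _).prod (isCompact_sphere _ _)).measure_lt_top.ne
  · intro i j hij
    rw [Function.onFun, Set.disjoint_left]
    rintro ⟨x, y⟩ ⟨h1, h3⟩ ⟨h2, h4⟩
    simp only [mem_sphere_iff_norm] at h1 h2 h3 h4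
    have h5 := pow_right_injective₀ (by linarith) hP.ne' (h1.symm.trans h2)
    have h6 := pow_right_injective₀ (by linarith) hP.ne' (h3.symm.trans h4)
    apply hij
    ext <;> lia
  · rintro k ⟨x, y⟩ ⟨h1, h2⟩
    simp only [mem_sphere_iff_norm, sub_zero] at h1 h2
    have h3 : 1 < (p:ℝ) ^ (k.1+1) := one_lt_pow₀ hP (by lia)
    have h4 : 1 < (p:ℝ) ^ (k.1+1+k.2) := one_lt_pow₀ hP (by lia)
    have h5 : (p:ℝ) ^ (k.1+1) ≤ (p:ℝ) ^ (k.1+1+k.2) := pow_le_pow_right₀ hP.le (by lia)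
    simp only [dens]
    rw [aux_sub_one_big (x := x) (h4.trans_eq h1.symm), aux_sub_one_big (x := y) (h3.trans_eq h2.symm), h1, h2, max_eq_right h3.le,
      max_eq_right h5]
  · simp only [measureReal_prod_prod, aux_sphere_pos μ hμ]
    refine aux_hs ((aux_geom2 p).mul_right ((1 - (p:ℝ)⁻¹)^2)) (fun k => ?_) ?_
    · simp only [inv_pow, pow_add]; field_simp
    · have : 1 - (p:ℝ)⁻¹ ≠ 0 := by linarith
      generalize (p:ℝ)⁻¹ = q at *
      field_simp

/-- Piece `1 < |x| < |y|`. -/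
theorem pieceA4b (hμ : μ {x : ℚ_[p] | ‖x‖ ≤ 1} = 1)
    : HasInt (μ.prod μ) dens
    {z : ℚ_[p] × ℚ_[p] | 1 < ‖z.1‖ ∧ ‖z.1‖ < ‖z.2‖} ((p:ℝ)⁻¹ ^ 2) := by
  have hP := aux_one_lt p
  obtain ⟨hq0, hq1⟩ := aux_q p
  have hU : {z : ℚ_[p] × ℚ_[p] | 1 < ‖z.1‖ ∧ ‖z.1‖ < ‖z.2‖} =
      ⋃ k : ℕ × ℕ, Metric.sphere 0 ((p:ℝ) ^ (k.1+1)) ×ˢ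
        Metric.sphere 0 ((p:ℝ) ^ (k.1+1+k.2+1)) := by
    ext ⟨x, y⟩
    simp only [Set.mem_ofPred_eq, Set.mem_iUnion, Set.mem_prod, mem_sphere_iff_norm, sub_zero]
    constructor
    · rintro ⟨h1, h2⟩
      obtain ⟨k, hk⟩ := aux_exists_gt h1
      obtain ⟨l, hl⟩ := aux_exists_gt (h1.trans h2)
      rw [hk, hl, pow_lt_pow_iff_right₀ hP] at h2
      exact ⟨(k, l - k - 1), hk, by rw [hl]; congr 1; simp; lia⟩
    · rintro ⟨k, h, hk⟩
      exact ⟨h ▸ one_lt_pow₀ hP (by lia), hk ▸ h ▸ pow_lt_pow_right₀ hP (by lia)⟩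
  rw [hU]
  refine HasInt.iUnion _ (fun k => ((p:ℝ) ^ (k.1+1) * (p:ℝ) ^ (k.1+1+k.2+1) *
    (p:ℝ) ^ (k.1+1+k.2+1))⁻¹) ?_ ?_ ?_ ?_ dens_nonneg ?_
  · exact fun k => Metric.isClosed_sphere.measurableSet.prod Metric.isClosed_sphere.measurableSet
  · exact fun k => ((isCompact_sphere _ _).prod (isCompact_sphere _ _)).measure_lt_top.ne
  · intro i j hij
    rw [Function.onFun, Set.disjoint_left]
    rintro ⟨x, y⟩ ⟨h1, h3⟩ ⟨h2, h4⟩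
    simp only [mem_sphere_iff_norm] at h1 h2 h3 h4
    have h5 := pow_right_injective₀ (by linarith) hP.ne' (h1.symm.trans h2)
    have h6 := pow_right_injective₀ (by linarith) hP.ne' (h3.symm.trans h4)
    apply hij
    ext <;> lia
  · rintro k ⟨x, y⟩ ⟨h1, h2⟩
    simp only [mem_sphere_iff_norm, sub_zero] at h1 h2
    have h3 : 1 < (p:ℝ) ^ (k.1+1) := one_lt_pow₀ hP (by lia)
    have h4 : 1 < (p:ℝ) ^ (k.1+1+k.2+1) := one_lt_pow₀ hP (by lia)
    have h5 : (p:ℝ) ^ (k.1+1) ≤ (p:ℝ) ^ (k.1+1+k.2+1) := pow_le_pow_right₀ hP.le (by lia)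
    simp only [dens]
    rw [aux_sub_one_big (x := x) (h3.trans_eq h1.symm), aux_sub_one_big (x := y) (h4.trans_eq h2.symm), h1, h2, max_eq_right h4.le,
      max_eq_left h5]
  · simp only [measureReal_prod_prod, aux_sphere_pos μ hμ]
    refine aux_hs ((aux_geom2 p).mul_right ((p:ℝ)⁻¹ * (1 - (p:ℝ)⁻¹)^2)) (fun k => ?_) ?_
    · simp only [inv_pow, pow_add]; field_simp
    · have : 1 - (p:ℝ)⁻¹ ≠ 0 := by linarith
      generalize (p:ℝ)⁻¹ = q at *
      field_simp

/-- Piece close to `(1, 1)`. -/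
theorem pieceA1b (hμ : μ {x : ℚ_[p] | ‖x‖ ≤ 1} = 1)
    : HasInt (μ.prod μ) dens
    {z : ℚ_[p] × ℚ_[p] | 0 < max ‖z.2 - 1‖ ‖z.1 - 1‖ ∧ max ‖z.2 - 1‖ ‖z.1 - 1‖ < 1}
    ((p:ℝ)⁻¹ * (1 + (p:ℝ)⁻¹)) := by
  have hP := aux_one_lt p
  obtain ⟨hq0, hq1⟩ := aux_q p
  let S : ℕ → Set (ℚ_[p] × ℚ_[p]) := fun k =>
    (Metric.closedBall 1 ((p:ℝ)⁻¹ ^ (k+1)) ×ˢ Metric.closedBall 1 ((p:ℝ)⁻¹ ^ (k+1))) \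
    (Metric.closedBall 1 ((p:ℝ)⁻¹ ^ (k+1+1)) ×ˢ Metric.closedBall 1 ((p:ℝ)⁻¹ ^ (k+1+1)))
  have hS : ∀ k z, z ∈ S k ↔ max ‖z.2 - 1‖ ‖z.1 - 1‖ = (p:ℝ)⁻¹ ^ (k+1) := by
    rintro k ⟨x, y⟩
    simp only [S, Set.mem_sdiff, Set.mem_prod, mem_closedBall_iff_norm, aux_le_iff _ (k+1)]
    rw [and_comm (a := ‖x - 1‖ ≤ _), and_comm (a := ‖x - 1‖ < _), ← max_le_iff, ← max_lt_iff,
      not_lt]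
    exact le_antisymm_iff.symm
  have hU : {z : ℚ_[p] × ℚ_[p] | 0 < max ‖z.2 - 1‖ ‖z.1 - 1‖ ∧ max ‖z.2 - 1‖ ‖z.1 - 1‖ < 1} =
      ⋃ k : ℕ, S k := by
    ext ⟨x, y⟩
    simp only [Set.mem_ofPred_eq, Set.mem_iUnion, hS]
    constructor
    · rintro ⟨h1, h2⟩
      rcases max_choice ‖y - 1‖ ‖x - 1‖ with h | h <;> rw [h] at h1 h2 ⊢ <;>
      exact aux_exists_lt (norm_pos_iff.1 h1) h2
    · rintro ⟨k, hk⟩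
      rw [hk]
      exact ⟨by positivity, pow_lt_one₀ hq0.le hq1 (by lia)⟩
  rw [hU]
  have hB : ∀ r : ℝ, MeasurableSet
      ((Metric.closedBall (1 : ℚ_[p]) r) ×ˢ (Metric.closedBall (1 : ℚ_[p]) r)) := fun r =>
    Metric.isClosed_closedBall.measurableSet.prod Metric.isClosed_closedBall.measurableSet
  have hF : ∀ r : ℝ, (μ.prod μ)
      ((Metric.closedBall (1 : ℚ_[p]) r) ×ˢ (Metric.closedBall (1 : ℚ_[p]) r)) ≠ ⊤ := fun r =>
    ((isCompact_closedBall _ _).prod (isCompact_closedBall _ _)).measure_lt_top.ne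
  refine HasInt.iUnion _ (fun k => ((p:ℝ)⁻¹ ^ (k+1))⁻¹) ?_ ?_ ?_ ?_ dens_nonneg ?_
  · exact fun k => (hB _).diff (hB _)
  · exact fun k => measure_ne_top_of_subset Set.sdiff_subset (hF _)
  · intro i j hij
    rw [Function.onFun, Set.disjoint_left]
    intro z h1 h2
    rw [hS] at h1 h2
    have := pow_right_injective₀ hq0 hq1.ne (h1.symm.trans h2)
    lia
  · intro k z h1
    rw [hS] at h1
    have h3 : (p:ℝ)⁻¹ ^ (k+1) < 1 := pow_lt_one₀ hq0.le hq1 (by lia)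
    have h4 := max_lt_iff.1 (h1.trans_lt h3)
    simp only [dens]
    rw [h1, aux_of_sub_one_lt h4.1, aux_of_sub_one_lt h4.2]
    simp
  · have h5 : ∀ k, (μ.prod μ).real (S k) =
        ((p:ℝ)⁻¹ ^ (k+1)) ^ 2 * (1 - (p:ℝ)⁻¹ ^ 2) := by
      intro k
      have hle : (p:ℝ)⁻¹ ^ (k+1+1) ≤ (p:ℝ)⁻¹ ^ (k+1) :=
        pow_le_pow_of_le_one hq0.le hq1.le (by lia)
      rw [measureReal_sdiff (h₁ := hF _) (Set.prod_mono (Metric.closedBall_subset_closedBall hle)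
        (Metric.closedBall_subset_closedBall hle)) (hB _)]
      simp only [measureReal_prod_prod, aux_ball_neg μ hμ]
      ring
    simp only [h5]
    refine aux_hs ((aux_geom p).mul_right (1 - (p:ℝ)⁻¹ ^ 2)) (fun k => ?_) ?_
    · generalize (p:ℝ)⁻¹ = q at *
      field_simp
    · have : 1 - (p:ℝ)⁻¹ ≠ 0 := by linarith
      generalize (p:ℝ)⁻¹ = q at *
      field_simp
      ring

/-- Piece `|x| = 1`, `|y| ≤ 1`, away from `(1, 1)`. -/
theorem pieceA1a (hμ : μ {x : ℚ_[p] | ‖x‖ ≤ 1} = 1)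
    : HasInt (μ.prod μ) dens
    {z : ℚ_[p] × ℚ_[p] | ‖z.1‖ = 1 ∧ ‖z.2‖ ≤ 1 ∧ max ‖z.2 - 1‖ ‖z.1 - 1‖ = 1}
    (1 - (p:ℝ)⁻¹ - (p:ℝ)⁻¹ ^ 2) := by
  have hP := aux_one_lt p
  obtain ⟨hq0, hq1⟩ := aux_q p
  have hU : {z : ℚ_[p] × ℚ_[p] | ‖z.1‖ = 1 ∧ ‖z.2‖ ≤ 1 ∧ max ‖z.2 - 1‖ ‖z.1 - 1‖ = 1} =
      (Metric.sphere 0 1 ×ˢ Metric.closedBall 0 1) \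
      (Metric.closedBall 1 ((p:ℝ)⁻¹ ^ (0+1)) ×ˢ Metric.closedBall 1 ((p:ℝ)⁻¹ ^ (0+1))) := by
    ext ⟨x, y⟩
    simp only [Set.mem_ofPred_eq, Set.mem_sdiff, Set.mem_prod, mem_closedBall_iff_norm,
      aux_le_iff _ 0, mem_sphere_iff_norm, sub_zero, pow_zero]
    rw [and_comm (a := ‖x - 1‖ < _), ← max_lt_iff, not_lt, and_assoc]
    refine and_congr_right fun h1 => and_congr_right fun h2 => ?_
    rw [le_antisymm_iff]
    exact and_iff_right (max_le (aux_sub_one_le h2) (aux_sub_one_le h1.le))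
  have hB : ∀ r : ℝ, MeasurableSet
      ((Metric.closedBall (1 : ℚ_[p]) r) ×ˢ (Metric.closedBall (1 : ℚ_[p]) r)) := fun r =>
    Metric.isClosed_closedBall.measurableSet.prod Metric.isClosed_closedBall.measurableSet
  have hB' : MeasurableSet
      ((Metric.sphere (0 : ℚ_[p]) 1) ×ˢ (Metric.closedBall (0 : ℚ_[p]) 1)) :=
    Metric.isClosed_sphere.measurableSet.prod Metric.isClosed_closedBall.measurableSet
  have hF : (μ.prod μ)
      ((Metric.sphere (0 : ℚ_[p]) 1) ×ˢ (Metric.closedBall (0 : ℚ_[p]) 1)) ≠ ⊤ :=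
    ((isCompact_sphere _ _).prod (isCompact_closedBall _ _)).measure_lt_top.ne
  convert HasInt.const (c := 1) (hU ▸ hB'.diff (hB _))
    (hU ▸ measure_ne_top_of_subset Set.sdiff_subset hF) ?_ using 1
  · rw [hU, measureReal_sdiff (h₁ := hF) _ (hB _)]
    · simp only [measureReal_prod_prod, aux_ball_neg μ hμ, aux_ball_one μ hμ, aux_sphere_one μ hμ]
      ring
    · rintro ⟨x, y⟩
      simp only [Set.mem_prod, mem_closedBall_iff_norm,
        aux_le_iff _ 0, mem_sphere_iff_norm, sub_zero, pow_zero]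
      rintro ⟨h1, h2⟩
      exact ⟨aux_of_sub_one_lt h1, (aux_of_sub_one_lt h2).le⟩
  · rintro z ⟨h1, h2, h3⟩
    simp only [dens]
    rw [h1, h3, max_eq_left h2]; simp

end pieces


theorem aux_disj {X : Type*} {P Q : X → Prop} (h : ∀ x, P x → ¬ Q x) :
    Disjoint {x | P x} {x | Q x} := Set.disjoint_left.2 h

theorem aux_and {X : Type*} [MeasurableSpace X] {P Q : X → Prop} (hP : MeasurableSet {x | P x})
    (hQ : MeasurableSet {x | Q x}) : MeasurableSet {x | P x ∧ Q x} := hP.inter hQ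

theorem aux_not {X : Type*} [MeasurableSpace X] {P : X → Prop} (hP : MeasurableSet {x | P x}) :
    MeasurableSet {x | ¬ P x} := hP.compl

/-- The expected `p`-adic density: the integral of the local Tamagawa density
`(|x|_p max{1,|y|_p} max{|y-1|_p,|x-1|_p})⁻¹` over the region of integral points equals
`1 + 4/p`, where the Haar measure on `ℚ_p` is normalized by `μ(ℤ_p) = 1`. -/
theorem padic_density_integral
    (p : ℕ) [Fact p.Prime]
    [MeasurableSpace ℚ_[p]] [BorelSpace ℚ_[p]]
    (μ : Measure ℚ_[p]) [μ.IsAddHaarMeasure]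
    (hμ : μ {x : ℚ_[p] | ‖x‖ ≤ 1} = 1) :
    IntegrableOn
      (fun z : ℚ_[p] × ℚ_[p] =>
        (‖z.1‖ * max 1 ‖z.2‖ * max ‖z.2 - 1‖ ‖z.1 - 1‖)⁻¹)
      ({z : ℚ_[p] × ℚ_[p] | 1 ≤ ‖z.1‖} ∪
        {z : ℚ_[p] × ℚ_[p] | ‖z.2‖ ≤ ‖z.1‖ ∧ ‖z.1‖ < 1 ∧ z.1 ≠ 0})
      (μ.prod μ) ∧
    ∫ z in ({z : ℚ_[p] × ℚ_[p] | 1 ≤ ‖z.1‖} ∪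
        {z : ℚ_[p] × ℚ_[p] | ‖z.2‖ ≤ ‖z.1‖ ∧ ‖z.1‖ < 1 ∧ z.1 ≠ 0}),
        (‖z.1‖ * max 1 ‖z.2‖ * max ‖z.2 - 1‖ ‖z.1 - 1‖)⁻¹ ∂(μ.prod μ) =
      1 + 4 / (p : ℝ) := by
  have e1 : MeasurableSet {z : ℚ_[p] × ℚ_[p] | ‖z.2‖ ≤ ‖z.1‖ ∧ ‖z.1‖ < 1 ∧ z.1 ≠ 0} :=
    aux_and (measurableSet_le (by fun_prop) (by fun_prop))
      (aux_and (measurableSet_lt (by fun_prop) (by fun_prop))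
        (aux_not (measurableSet_eq_fun (by fun_prop) (by fun_prop))))
  have e2 : MeasurableSet {z : ℚ_[p] × ℚ_[p] | ‖z.1‖ = 1 ∧ 1 < ‖z.2‖} :=
    aux_and (measurableSet_eq_fun (by fun_prop) (by fun_prop))
      (measurableSet_lt (by fun_prop) (by fun_prop))
  have e3 : MeasurableSet {z : ℚ_[p] × ℚ_[p] | 1 < ‖z.1‖ ∧ ‖z.2‖ ≤ 1} :=
    aux_and (measurableSet_lt (by fun_prop) (by fun_prop))
      (measurableSet_le (by fun_prop) (by fun_prop))
  have e4 : MeasurableSet {z : ℚ_[p] × ℚ_[p] | 1 < ‖z.2‖ ∧ ‖z.2‖ ≤ ‖z.1‖} :=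
    aux_and (measurableSet_lt (by fun_prop) (by fun_prop))
      (measurableSet_le (by fun_prop) (by fun_prop))
  have e5 : MeasurableSet {z : ℚ_[p] × ℚ_[p] | 1 < ‖z.1‖ ∧ ‖z.1‖ < ‖z.2‖} :=
    aux_and (measurableSet_lt (by fun_prop) (by fun_prop))
      (measurableSet_lt (by fun_prop) (by fun_prop))
  have e6 : MeasurableSet {z : ℚ_[p] × ℚ_[p] | 0 < max ‖z.2 - 1‖ ‖z.1 - 1‖ ∧
      max ‖z.2 - 1‖ ‖z.1 - 1‖ < 1} :=
    aux_and (measurableSet_lt (by fun_prop) (by fun_prop))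
      (measurableSet_lt (by fun_prop) (by fun_prop))
  have e7 : MeasurableSet {z : ℚ_[p] × ℚ_[p] | ‖z.1‖ = 1 ∧ ‖z.2‖ ≤ 1 ∧
      max ‖z.2 - 1‖ ‖z.1 - 1‖ = 1} :=
    aux_and (measurableSet_eq_fun (by fun_prop) (by fun_prop))
      (aux_and (measurableSet_le (by fun_prop) (by fun_prop))
        (measurableSet_eq_fun (by fun_prop) (by fun_prop)))
  have h0 : HasInt (μ.prod μ) dens ({(1, 1)} : Set (ℚ_[p] × ℚ_[p])) 0 := by
    have := HasInt.const (ν := μ.prod μ) (f := dens) (measurableSet_singleton ((1, 1) : ℚ_[p] × ℚ_[p]))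
      isCompact_singleton.measure_lt_top.ne 0 (by rintro z rfl; simp [dens])
    simpa using this
  have k1 := h0.union (pieceA1b μ hμ) (by
    rw [Set.disjoint_left]; rintro z rfl; simp) e6
  have hk1 : ({(1, 1)} : Set (ℚ_[p] × ℚ_[p])) ∪ {z | 0 < max ‖z.2 - 1‖ ‖z.1 - 1‖ ∧
      max ‖z.2 - 1‖ ‖z.1 - 1‖ < 1} = {z | max ‖z.2 - 1‖ ‖z.1 - 1‖ < 1} := by
    ext ⟨x, y⟩
    by_cases h : (x, y) = ((1, 1) : ℚ_[p] × ℚ_[p])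
    · rw [h]; simp
    · have : 0 < max ‖y - 1‖ ‖x - 1‖ := by
        rw [lt_max_iff, norm_pos_iff, norm_pos_iff, sub_ne_zero, sub_ne_zero]
        by_contra hc
        push Not at hc
        exact h (by rw [hc.1, hc.2])
      simp only [Set.mem_union, Set.mem_singleton_iff, h, Set.mem_ofPred_eq, this, true_and,
        false_or]
  rw [hk1] at k1
  have k2 := k1.union (pieceA1a μ hμ) (aux_disj fun z h1 h2 => h1.ne h2.2.2) e7
  have hk2 : {z : ℚ_[p] × ℚ_[p] | max ‖z.2 - 1‖ ‖z.1 - 1‖ < 1} ∪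
      {z : ℚ_[p] × ℚ_[p] | ‖z.1‖ = 1 ∧ ‖z.2‖ ≤ 1 ∧ max ‖z.2 - 1‖ ‖z.1 - 1‖ = 1} =
      {z | ‖z.1‖ = 1 ∧ ‖z.2‖ ≤ 1} := by
    ext ⟨x, y⟩
    simp only [Set.mem_union, Set.mem_ofPred_eq]
    constructor
    · rintro (h | ⟨h1, h2, -⟩)
      · have h' := max_lt_iff.1 h
        exact ⟨aux_of_sub_one_lt h'.2, (aux_of_sub_one_lt h'.1).le⟩
      · exact ⟨h1, h2⟩
    · rintro ⟨h1, h2⟩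
      rcases (max_le (aux_sub_one_le h2) (aux_sub_one_le h1.le)).lt_or_eq with h | h
      · exact Or.inl h
      · exact Or.inr ⟨h1, h2, h⟩
  rw [hk2] at k2
  have k3 := k2.union (pieceA2 μ hμ) (aux_disj fun z h1 h2 => h1.2.not_gt h2.2) e2
  have k4 := (pieceA3 μ hμ).union (pieceA4a μ hμ) (aux_disj fun z h1 h2 => h1.2.not_gt h2.1) e4
  have k5 := k4.union (pieceA4b μ hμ) (by
    rw [Set.disjoint_left]
    rintro z (⟨h1, h2⟩ | ⟨h1, h2⟩) ⟨h3, h4⟩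
    · linarith
    · linarith) e5
  have k6 := k3.union k5 (by
    rw [Set.disjoint_left]
    rintro z (⟨h1, h2⟩ | ⟨h1, h2⟩) ((⟨h3, h4⟩ | ⟨h3, h4⟩) | ⟨h3, h4⟩) <;> linarith)
    ((e3.union e4).union e5)
  have hk6 : ({z : ℚ_[p] × ℚ_[p] | ‖z.1‖ = 1 ∧ ‖z.2‖ ≤ 1} ∪ {z | ‖z.1‖ = 1 ∧ 1 < ‖z.2‖}) ∪
      (({z | 1 < ‖z.1‖ ∧ ‖z.2‖ ≤ 1} ∪ {z | 1 < ‖z.2‖ ∧ ‖z.2‖ ≤ ‖z.1‖}) ∪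
        {z | 1 < ‖z.1‖ ∧ ‖z.1‖ < ‖z.2‖}) = {z | 1 ≤ ‖z.1‖} := by
    ext z
    simp only [Set.mem_union, Set.mem_ofPred_eq]
    constructor
    · rintro ((⟨h1, h2⟩ | ⟨h1, h2⟩) | ((⟨h3, h4⟩ | ⟨h3, h4⟩) | ⟨h3, h4⟩)) <;> linarith
    · intro h
      rcases h.eq_or_lt with h1 | h1 <;> rcases le_or_gt ‖z.2‖ 1 with h2 | h2
      · exact Or.inl (Or.inl ⟨h1.symm, h2⟩)
      · exact Or.inl (Or.inr ⟨h1.symm, h2⟩)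
      · exact Or.inr (Or.inl (Or.inl ⟨h1, h2⟩))
      · rcases le_or_gt ‖z.2‖ ‖z.1‖ with h3 | h3
        · exact Or.inr (Or.inl (Or.inr ⟨h2, h3⟩))
        · exact Or.inr (Or.inr ⟨h1, h3⟩)
  rw [hk6] at k6
  have k7 := k6.union (pieceB μ hμ) (aux_disj fun z h1 h2 => h1.not_gt h2.2.1) e1
  refine ⟨k7.1, k7.2.trans ?_⟩
  rw [div_eq_mul_inv]
  ring
end

section
/- For every natural number $q$, $\frac{1}{q!}\int_{P} \Big(\frac{1}{2}(t_3 + t_4 + 1) - t_1 - t_2\Big)^q \, dt_1\, dt_2\, dt_3\, dt_4 = \frac{2}{3} \cdot \frac{1}{2\, q!}\int_{P_\alpha} \Big(\frac{1}{2}(1 - 2t_1 - 2t_2 + t_3 + t_4)\Big)^q \, dt_1\, dt_2\, dt_3\, dt_4$, i.e., $V_1 = \frac{2}{3}\alpha(X)$, where $P = \{t \in \mathbb{R}^4_{\ge 0} : 2t_1 + t_3 + t_4 \le 1,\ 2t_2 + t_3 + t_4 \le 1,\ 2t_i + 2t_j - t_3 - t_4 \le 1 \text{ for all distinct } i,j\}$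 and $P_\alpha = \{t \in \mathbb{R}^4_{\ge 0} : 2t_i + 2t_j - t_3 - t_4 \le 1 \text{ for all distinct } i,j \in \{1,2,3,4\}\}$. -/
open MeasureTheory

/-- The polytope `P_α`. -/
def PA : Set (Fin 4 → ℝ) := {t | (∀ k, 0 ≤ t k) ∧
          ∀ i j : Fin 4, i ≠ j → 2 * t i + 2 * t j - t 2 - t 3 ≤ 1}

/-- The integrand. -/
noncomputable def F (q : ℕ) (t : Fin 4 → ℝ) : ℝ := ((1 / 2) * (1 - 2 * t 0 - 2 * t 1 + t 2 + t 3)) ^ q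

lemma mem_PA (t : Fin 4 → ℝ) : t ∈ PA ↔ (0 ≤ t 0 ∧ 0 ≤ t 1 ∧ 0 ≤ t 2 ∧ 0 ≤ t 3) ∧
    2 * t 0 + 2 * t 1 - t 2 - t 3 ≤ 1 ∧ 2 * t 0 + t 2 - t 3 ≤ 1 ∧ 2 * t 0 - t 2 + t 3 ≤ 1 ∧
    2 * t 1 + t 2 - t 3 ≤ 1 ∧ 2 * t 1 - t 2 + t 3 ≤ 1 ∧ t 2 + t 3 ≤ 1 := by
  constructor
  · rintro ⟨h, h'⟩
    have h01 := h' 0 1 (by decide)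
    have h02 := h' 0 2 (by decide)
    have h03 := h' 0 3 (by decide)
    have h12 := h' 1 2 (by decide)
    have h13 := h' 1 3 (by decide)
    have h23 := h' 2 3 (by decide)
    refine ⟨⟨h 0, h 1, h 2, h 3⟩, ?_, ?_, ?_, ?_, ?_, ?_⟩ <;> linarith
  · rintro ⟨⟨h0, h1, h2, h3⟩, h4, h5, h6, h7, h8, h9⟩
    refine ⟨fun k => by fin_cases k <;> assumption, fun i j hij => ?_⟩
    fin_cases i <;> fin_cases j <;> first | exact absurd rfl hij | (simp; linarith)

lemma mp_affine (M : Matrix (Fin 4) (Fin 4) ℝ) (v : Fin 4 → ℝ) (h : |M.det| = 1) :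
    MeasurePreserving (fun t => M.mulVec t + v) (volume : Measure (Fin 4 → ℝ)) volume := by
  have hd : M.det ≠ 0 := by intro h0; simp [h0] at h
  have h1 : MeasurePreserving (Matrix.toLin' M) (volume : Measure (Fin 4 → ℝ)) volume := by
    refine ⟨(LinearMap.continuous_of_finiteDimensional _).measurable, ?_⟩
    rw [Real.map_matrix_volume_pi_eq_smul_volume_pi hd, abs_inv, h]
    simp
  exact (measurePreserving_add_right volume v).comp h1

/-- Swap of `t 0` with `(1 - t 2 - t 3) / 2`. -/
noncomputable def T0 (t : Fin 4 → ℝ) : Fin 4 → ℝ :=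
  ![(1 - t 2 - t 3) / 2, t 1, (1 - 2 * t 0 + t 2 - t 3) / 2, (1 - 2 * t 0 - t 2 + t 3) / 2]

/-- Swap of `t 1` with `(1 - t 2 - t 3) / 2`. -/
noncomputable def T1 (t : Fin 4 → ℝ) : Fin 4 → ℝ :=
  ![t 0, (1 - t 2 - t 3) / 2, (1 - 2 * t 1 + t 2 - t 3) / 2, (1 - 2 * t 1 - t 2 + t 3) / 2]

lemma mp_T0 : MeasurePreserving T0 volume volume := by
  convert mp_affine !![0,0,-1/2,-1/2; 0,1,0,0; -1,0,1/2,-1/2; -1,0,-1/2,1/2]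
    ![1/2,0,1/2,1/2] ?_ using 1
  · ext t i
    fin_cases i <;> simp [T0, dotProduct, Fin.sum_univ_four] <;> ring
  · simp [Matrix.det_succ_row_zero, Fin.sum_univ_succ, Fin.succAbove]
    norm_num

lemma mp_T1 : MeasurePreserving T1 volume volume := by
  convert mp_affine !![1,0,0,0; 0,0,-1/2,-1/2; 0,-1,1/2,-1/2; 0,-1,-1/2,1/2]
    ![0,1/2,1/2,1/2] ?_ using 1
  · ext t i
    fin_cases i <;> simp [T1, dotProduct, Fin.sum_univ_four] <;> ring
  · simp [Matrix.det_succ_row_zero, Fin.sum_univ_succ, Fin.succAbove]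
    norm_num

lemma T0_T0 (t : Fin 4 → ℝ) : T0 (T0 t) = t := by
  ext i; fin_cases i <;> simp [T0] <;> ring

lemma T1_T1 (t : Fin 4 → ℝ) : T1 (T1 t) = t := by
  ext i; fin_cases i <;> simp [T1] <;> ring

lemma emb_T0 : MeasurableEmbedding T0 :=
  (MeasurableEquiv.mk ⟨T0, T0, T0_T0, T0_T0⟩ mp_T0.measurable mp_T0.measurable).measurableEmbedding

lemma emb_T1 : MeasurableEmbedding T1 :=
  (MeasurableEquiv.mk ⟨T1, T1, T1_T1, T1_T1⟩ mp_T1.measurable mp_T1.measurable).measurableEmbedding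

lemma F_T0 (q : ℕ) (t : Fin 4 → ℝ) : F q (T0 t) = F q t := by
  simp only [F]; congr 1; simp [T0]; ring

lemma F_T1 (q : ℕ) (t : Fin 4 → ℝ) : F q (T1 t) = F q t := by
  simp only [F]; congr 1; simp [T1]; ring

lemma PA_T0 (t : Fin 4 → ℝ) : T0 t ∈ PA ↔ t ∈ PA := by
  simp only [mem_PA]; simp [T0]
  constructor
  · rintro ⟨⟨h0, h1, h2, h3⟩, h4, h5, h6, h7, h8, h9⟩
    refine ⟨⟨?_, ?_, ?_, ?_⟩, ?_, ?_, ?_, ?_, ?_, ?_⟩ <;> linarith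
  · rintro ⟨⟨h0, h1, h2, h3⟩, h4, h5, h6, h7, h8, h9⟩
    refine ⟨⟨?_, ?_, ?_, ?_⟩, ?_, ?_, ?_, ?_, ?_, ?_⟩ <;> linarith

lemma PA_T1 (t : Fin 4 → ℝ) : T1 t ∈ PA ↔ t ∈ PA := by
  simp only [mem_PA]; simp [T1]
  constructor
  · rintro ⟨⟨h0, h1, h2, h3⟩, h4, h5, h6, h7, h8, h9⟩
    refine ⟨⟨?_, ?_, ?_, ?_⟩, ?_, ?_, ?_, ?_, ?_, ?_⟩ <;> linarith
  · rintro ⟨⟨h0, h1, h2, h3⟩, h4, h5, h6, h7, h8, h9⟩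
    refine ⟨⟨?_, ?_, ?_, ?_⟩, ?_, ?_, ?_, ?_, ?_, ?_⟩ <;> linarith

lemma hyper (j : Fin 4) (hj : j = 0 ∨ j = 1) :
    ∀ᵐ t : Fin 4 → ℝ, 2 * t j + t 2 + t 3 ≠ 1 := by
  let A : AffineSubspace ℝ (Fin 4 → ℝ) :=
    { carrier := {t | 2 * t j + t 2 + t 3 = 1}
      smul_vsub_vadd_mem' := by
        intro c p1 p2 p3 h1 h2 h3
        simp only [Set.mem_ofPred_eq] at *
        simp
        linear_combination c * h1 - c * h2 + h3 }
  have hA : A ≠ ⊤ := by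
    intro h
    have : (0 : Fin 4 → ℝ) ∈ A := by rw [h]; trivial
    have h' : 2 * (0 : Fin 4 → ℝ) j + (0 : Fin 4 → ℝ) 2 + (0 : Fin 4 → ℝ) 3 = 1 := this
    simp at h'
  have := Measure.addHaar_affineSubspace (volume : Measure (Fin 4 → ℝ)) A hA
  rw [ae_iff]
  simp only [ne_eq, not_not]
  exact this

/-- The subpolytope `P`. -/
def S : Set (Fin 4 → ℝ) := {t | t ∈ PA ∧ 2 * t 0 + t 2 + t 3 ≤ 1 ∧ 2 * t 1 + t 2 + t 3 ≤ 1}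
/-- The part where `t 0` is largest. -/
def SA : Set (Fin 4 → ℝ) := {t | t ∈ PA ∧ 1 < 2 * t 0 + t 2 + t 3 ∧ t 1 ≤ t 0}
/-- The part where `t 1` is largest. -/
def SB : Set (Fin 4 → ℝ) := {t | t ∈ PA ∧ 1 < 2 * t 1 + t 2 + t 3 ∧ t 0 < t 1}

lemma meas_PA : MeasurableSet PA := by
  have : PA = {t | (0 ≤ t 0 ∧ 0 ≤ t 1 ∧ 0 ≤ t 2 ∧ 0 ≤ t 3) ∧
    2 * t 0 + 2 * t 1 - t 2 - t 3 ≤ 1 ∧ 2 * t 0 + t 2 - t 3 ≤ 1 ∧ 2 * t 0 - t 2 + t 3 ≤ 1 ∧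
    2 * t 1 + t 2 - t 3 ≤ 1 ∧ 2 * t 1 - t 2 + t 3 ≤ 1 ∧ t 2 + t 3 ≤ 1} := Set.ext mem_PA
  rw [this]
  measurability

lemma meas_SA : MeasurableSet SA := by
  have h1 : MeasurableSet {t : Fin 4 → ℝ | 1 < 2 * t 0 + t 2 + t 3} :=
    measurableSet_lt (by fun_prop) (by fun_prop)
  have h2 : MeasurableSet {t : Fin 4 → ℝ | t 1 ≤ t 0} :=
    measurableSet_le (by fun_prop) (by fun_prop)
  exact meas_PA.inter (h1.inter h2)

lemma meas_SB : MeasurableSet SB := by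
  have h1 : MeasurableSet {t : Fin 4 → ℝ | 1 < 2 * t 1 + t 2 + t 3} :=
    measurableSet_lt (by fun_prop) (by fun_prop)
  have h2 : MeasurableSet {t : Fin 4 → ℝ | t 0 < t 1} :=
    measurableSet_lt (by fun_prop) (by fun_prop)
  exact meas_PA.inter (h1.inter h2)

lemma PA_eq : PA = S ∪ (SA ∪ SB) := by
  ext t
  simp only [S, SA, SB, Set.mem_union, Set.mem_ofPred_eq]
  constructor
  · intro h
    by_cases h0 : 2 * t 0 + t 2 + t 3 ≤ 1 <;> by_cases h1 : 2 * t 1 + t 2 + t 3 ≤ 1 <;>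
      by_cases h2 : t 1 ≤ t 0 <;>
      (try rw [not_le] at h0) <;> (try rw [not_le] at h1) <;> (try rw [not_le] at h2) <;>
      first
      | exact Or.inl ⟨h, by linarith, by linarith⟩
      | exact Or.inr (Or.inl ⟨h, by linarith, by linarith⟩)
      | exact Or.inr (Or.inr ⟨h, by linarith, by linarith⟩)
  · tauto

lemma int_F (q : ℕ) : IntegrableOn (F q) PA := by
  have hc : Continuous (F q) := by unfold F; fun_prop
  refine (hc.continuousOn.integrableOn_compact (isCompact_Icc (a := (0 : Fin 4 → ℝ)) (b := 1))).mono_set ?_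
  intro t ht
  rw [mem_PA] at ht
  obtain ⟨⟨h0, h1, h2, h3⟩, h4, h5, h6, h7, h8, h9⟩ := ht
  constructor <;> intro i <;> fin_cases i <;> simp <;> linarith

lemma int_SA (q : ℕ) : ∫ t in SA, F q t = ∫ t in S, F q t := by
  have h := mp_T0.setIntegral_preimage_emb emb_T0 (F q) S
  rw [← h]
  simp only [F_T0]
  refine setIntegral_congr_set ?_
  filter_upwards [hyper 0 (Or.inl rfl)] with t ht
  refine propext ?_
  change t ∈ SA ↔ T0 t ∈ S
  simp only [S, SA, Set.mem_ofPred_eq, PA_T0]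
  simp only [T0, Matrix.cons_val]
  constructor
  · rintro ⟨h, h1, h2⟩
    exact ⟨h, by linarith, by linarith⟩
  · rintro ⟨h, h1, h2⟩
    exact ⟨h, lt_of_le_of_ne (by linarith) (Ne.symm ht), by linarith⟩

lemma hyper01 : ∀ᵐ t : Fin 4 → ℝ, t 0 ≠ t 1 := by
  let A : AffineSubspace ℝ (Fin 4 → ℝ) :=
    { carrier := {t | t 0 = t 1}
      smul_vsub_vadd_mem' := by
        intro c p1 p2 p3 h1 h2 h3
        simp only [Set.mem_ofPred_eq] at *
        simp
        linear_combination c * h1 - c * h2 + h3 }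
  have hA : A ≠ ⊤ := by
    intro h
    have : (![0, 1, 0, 0] : Fin 4 → ℝ) ∈ A := by rw [h]; trivial
    have h' : (![0, 1, 0, 0] : Fin 4 → ℝ) 0 = (![0, 1, 0, 0] : Fin 4 → ℝ) 1 := this
    simp at h'
  have := Measure.addHaar_affineSubspace (volume : Measure (Fin 4 → ℝ)) A hA
  rw [ae_iff]
  simp only [ne_eq, not_not]
  exact this

lemma int_SB (q : ℕ) : ∫ t in SB, F q t = ∫ t in S, F q t := by
  have h := mp_T1.setIntegral_preimage_emb emb_T1 (F q) S
  rw [← h]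
  simp only [F_T1]
  refine setIntegral_congr_set ?_
  filter_upwards [hyper 1 (Or.inr rfl), hyper01] with t ht ht'
  refine propext ?_
  change t ∈ SB ↔ T1 t ∈ S
  simp only [S, SB, Set.mem_ofPred_eq, PA_T1]
  simp only [T1, Matrix.cons_val]
  constructor
  · rintro ⟨h, h1, h2⟩
    exact ⟨h, by linarith, by linarith⟩
  · rintro ⟨h, h1, h2⟩
    exact ⟨h, lt_of_le_of_ne (by linarith) (Ne.symm ht), lt_of_le_of_ne (by linarith) ht'⟩

lemma key (q : ℕ) : ∫ t in PA, F q t = 3 * ∫ t in S, F q t := by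
  have hi := int_F q
  have hAB : Disjoint SA SB := by
    rw [Set.disjoint_left]
    rintro t ⟨-, -, h⟩ ⟨-, -, h'⟩
    linarith
  have hS : Disjoint S (SA ∪ SB) := by
    rw [Set.disjoint_left]
    rintro t ⟨-, h, h'⟩ (⟨-, h1, -⟩ | ⟨-, h1, -⟩) <;> linarith
  have e : ∫ t in PA, F q t = ∫ t in S ∪ (SA ∪ SB), F q t := by rw [← PA_eq]
  rw [e, setIntegral_union hS (meas_SA.union meas_SB) (hi.mono_set fun t h => h.1)
    (hi.mono_set (by rw [PA_eq]; exact Set.subset_union_right)),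
    setIntegral_union hAB meas_SB (hi.mono_set fun t h => h.1) (hi.mono_set fun t h => h.1),
    int_SA, int_SB]
  ring

/-- `V₁ = (2/3) α(X)`: the integral of `((t₃+t₄+1)/2 - t₁ - t₂)^q / q!` over the
subpolytope `P` equals `2/3` times the integral of `((1-2t₁-2t₂+t₃+t₄)/2)^q / (2 q!)` over
`P_α`. (Indices are 0-based: `t₁,…,t₄` are `t 0, t 1, t 2, t 3`.) -/
theorem V1_eq_two_thirds_alpha (q : ℕ) :
    (1 / (q.factorial : ℝ)) *
      ∫ t in {t : Fin 4 → ℝ | (∀ k, 0 ≤ t k) ∧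
          2 * t 0 + t 2 + t 3 ≤ 1 ∧ 2 * t 1 + t 2 + t 3 ≤ 1 ∧
          ∀ i j : Fin 4, i ≠ j → 2 * t i + 2 * t j - t 2 - t 3 ≤ 1},
        ((1 / 2) * (t 2 + t 3 + 1) - t 0 - t 1) ^ q =
    (2 / 3) * ((1 / (2 * (q.factorial : ℝ))) *
      ∫ t in {t : Fin 4 → ℝ | (∀ k, 0 ≤ t k) ∧
          ∀ i j : Fin 4, i ≠ j → 2 * t i + 2 * t j - t 2 - t 3 ≤ 1},
        ((1 / 2) * (1 - 2 * t 0 - 2 * t 1 + t 2 + t 3)) ^ q) := by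
  have hk := key q
  have e1 : {t : Fin 4 → ℝ | (∀ k, 0 ≤ t k) ∧
          2 * t 0 + t 2 + t 3 ≤ 1 ∧ 2 * t 1 + t 2 + t 3 ≤ 1 ∧
          ∀ i j : Fin 4, i ≠ j → 2 * t i + 2 * t j - t 2 - t 3 ≤ 1} = S := by
    ext t
    simp only [S, PA, Set.mem_ofPred_eq]
    tauto
  have e2 : ∀ t : Fin 4 → ℝ, ((1 / 2) * (t 2 + t 3 + 1) - t 0 - t 1) ^ q = F q t := by
    intro t
    simp only [F]
    congr 1
    ring
  rw [e1]
  simp only [e2]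
  change _ = (2 / 3) * ((1 / (2 * (q.factorial : ℝ))) * ∫ t in PA, F q t)
  rw [hk]
  have : (q.factorial : ℝ) ≠ 0 := by positivity
  field_simp
end
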